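/- Let a grid of ]0,R] with I cells be given, let β be symmetric with β(x_j, x_k) ≥ 0 for all pivots, and let N ∈ ℝ^I be componentwise nonnegative. Then Σ_{i=1}^I B̂_i(N) ≤ (1/2) Σ_{j=1}^I Σ_{k=1}^I β(x_j, x_k) N_j N_k ≤ Σ_{i=1}^I D̂_i(N). In particular the total discrete birth rate never exceeds the total discrete death rate, so the total number of particles is nonincreasing in the coagulation process. -/

import Mathlib

/-- The pivot (grid point) of the `k`-th cell: the midpoint of `]xb (k-1), xb k]`.
Here `xb k` denotes the cell boundary `x_{k+1/2}`. -/
noncomputable def pivot (xb : ℕ → ℝ) (k : ℕ) : ℝ := (xb (k - 1) + xb k) / 2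

/-- The pairs `(j,k)` with `1 ≤ k ≤ j ≤ I` such that `x_j + x_k` lies in the `i`-th cell
`[x_{i-1/2}, x_{i+1/2})`. -/
noncomputable def birthPairs (xb : ℕ → ℝ) (I i : ℕ) : Finset (ℕ × ℕ) :=
  (Finset.Icc 1 I ×ˢ Finset.Icc 1 I).filter
    (fun q => q.2 ≤ q.1 ∧ xb (i - 1) ≤ pivot xb q.1 + pivot xb q.2 ∧
      pivot xb q.1 + pivot xb q.2 < xb i)

/-- The discrete birth rate
`B̂_i(N) = ∑_{x_{i-1/2} ≤ x_j + x_k < x_{i+1/2}, j ≥ k} (1 − δ_{jk}/2) β(x_k, x_j) N_j N_k`. -/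
noncomputable def Bhat (xb : ℕ → ℝ) (β : ℝ → ℝ → ℝ) (I : ℕ) (N : ℕ → ℝ) (i : ℕ) : ℝ :=
  ∑ q ∈ birthPairs xb I i,
    (if q.1 = q.2 then (1 : ℝ)/2 else 1) * β (pivot xb q.2) (pivot xb q.1) * N q.1 * N q.2

/-- The discrete volume flux
`V̂_i(N) = ∑_{x_{i-1/2} ≤ x_j + x_k < x_{i+1/2}, j ≥ k} (1 − δ_{jk}/2) β(x_k, x_j) N_j N_k (x_j + x_k)`. -/
noncomputable def Vhat (xb : ℕ → ℝ) (β : ℝ → ℝ → ℝ) (I : ℕ) (N : ℕ → ℝ) (i : ℕ) : ℝ :=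
  ∑ q ∈ birthPairs xb I i,
    (if q.1 = q.2 then (1 : ℝ)/2 else 1) * β (pivot xb q.2) (pivot xb q.1) * N q.1 * N q.2 *
      (pivot xb q.1 + pivot xb q.2)

/-- The discrete death rate `D̂_i(N) = N_i ∑_{j=1}^I β(x_i, x_j) N_j`. -/
noncomputable def Dhat (xb : ℕ → ℝ) (β : ℝ → ℝ → ℝ) (I : ℕ) (N : ℕ → ℝ) (i : ℕ) : ℝ :=
  N i * ∑ j ∈ Finset.Icc 1 I, β (pivot xb i) (pivot xb j) * N j

/-!
A pair of cells is a birth pair of at most one cell, since the cells `[x_{i-1/2}, x_{i+1/2})` are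
disjoint. The total birth rate is therefore at most the weighted sum of `β(x_j, x_k) N_j N_k` over
all pairs `k ≤ j`. The weights `1/2` on the diagonal are exactly what makes that triangular sum half
of the symmetric double sum, and the full double sum is the total death rate.
-/

theorem pairwiseDisjoint_Ico_pred_of_monotoneOn {ι α : Type*} [LinearOrder ι] [PredOrder ι]
    [Preorder α] {f : ι → α} {s : Set ι} (hs : IsLowerSet s) (hf : MonotoneOn f s) :
    s.PairwiseDisjoint fun i => Set.Ico (f (Order.pred i)) (f i) := by
  intro i hi j hj hij
  wlog hlt : i < j generalizing i j
  · exact (this hj hi hij.symm (hij.lt_or_gt.resolve_left hlt)).symm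
  have hle : f i ≤ f (Order.pred j) :=
    hf hi (hs (Order.pred_le j) hj) (Order.le_pred_of_lt hlt)
  exact Set.disjoint_left.2 fun _ hxi hxj => (hxi.2.trans_le (hle.trans hxj.1)).false

theorem sum_lowerTriangle_eq_half_sum_of_symm {ι K : Type*} [LinearOrder ι] [DivisionSemiring K]
    [NeZero (2 : K)] {s : Finset ι} {g : ι → ι → K} (hg : ∀ j ∈ s, ∀ k ∈ s, g j k = g k j) :
    ∑ q ∈ s ×ˢ s with q.2 ≤ q.1, (if q.1 = q.2 then 1 / 2 else 1) * g q.1 q.2 =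
      1 / 2 * ∑ j ∈ s, ∑ k ∈ s, g j k := by
  let f : ι → ι → K := fun j k =>
    if k ≤ j then (if j = k then 1 / 2 else 1) * g j k else 0
  have hf : ∀ j ∈ s, ∀ k ∈ s, f j k + f k j = g j k := by
    intro j hj k hk
    rcases lt_trichotomy j k with hlt | rfl | hgt
    · simp [f, hlt.le, hlt.not_ge, hlt.ne', hg j hj k hk]
    · simp only [f, le_refl, if_true, ← add_mul, add_halves, one_mul]
    · simp [f, hgt.le, hgt.not_ge, hgt.ne']
  calc ∑ q ∈ s ×ˢ s with q.2 ≤ q.1, (if q.1 = q.2 then 1 / 2 else 1) * g q.1 q.2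
      = ∑ j ∈ s, ∑ k ∈ s, f j k := by rw [Finset.sum_filter, Finset.sum_product]
    _ = 1 / 2 * (∑ j ∈ s, ∑ k ∈ s, f j k + ∑ j ∈ s, ∑ k ∈ s, f j k) := by
      rw [mul_add, ← add_mul, add_halves, one_mul]
    _ = 1 / 2 * (∑ j ∈ s, ∑ k ∈ s, f j k + ∑ j ∈ s, ∑ k ∈ s, f k j) := by
      rw [Finset.sum_comm (f := fun j k => f k j)]
    _ = 1 / 2 * ∑ j ∈ s, ∑ k ∈ s, g j k := by
      simp only [← Finset.sum_add_distrib]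
      exact congrArg _ (Finset.sum_congr rfl fun j hj => Finset.sum_congr rfl (hf j hj))

theorem sum_sum_le_sum_of_pairwiseDisjoint {ι α M : Type*} [AddCommMonoid M] [PartialOrder M]
    [IsOrderedAddMonoid M] {s : Finset ι} {t : ι → Finset α} {u : Finset α} {f : α → M}
    (hst : (s : Set ι).PairwiseDisjoint t) (htu : ∀ i ∈ s, t i ⊆ u) (hf : ∀ a ∈ u, 0 ≤ f a) :
    ∑ i ∈ s, ∑ a ∈ t i, f a ≤ ∑ a ∈ u, f a := by
  classical
  rw [← Finset.sum_biUnion hst]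
  exact Finset.sum_le_sum_of_subset_of_nonneg (Finset.biUnion_subset.2 htu) fun a ha _ => hf a ha

/-- The rate `β(x_j, x_k) N_j N_k` at which particles of cell `j` collide with particles of cell
`k`: the common summand of the birth rate, the death rate and the double sum between them. -/
noncomputable def collisionRate (xb : ℕ → ℝ) (β : ℝ → ℝ → ℝ) (N : ℕ → ℝ) (j k : ℕ) : ℝ :=
  β (pivot xb j) (pivot xb k) * N j * N k

section CollisionRate

variable {xb : ℕ → ℝ} {β : ℝ → ℝ → ℝ} {N : ℕ → ℝ} {j k : ℕ}

theorem collisionRate_comm (hβ : β (pivot xb j) (pivot xb k) = β (pivot xb k) (pivot xb j)) :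
    collisionRate xb β N j k = collisionRate xb β N k j := by
  rw [collisionRate, collisionRate, hβ, mul_right_comm]

theorem collisionRate_nonneg (hβ : 0 ≤ β (pivot xb j) (pivot xb k)) (hj : 0 ≤ N j)
    (hk : 0 ≤ N k) : 0 ≤ collisionRate xb β N j k :=
  mul_nonneg (mul_nonneg hβ hj) hk

end CollisionRate

section Rates

variable {xb : ℕ → ℝ} {β : ℝ → ℝ → ℝ} {I : ℕ} {N : ℕ → ℝ}

theorem pairwiseDisjoint_birthPairs (hxb : MonotoneOn xb (Set.Iic I)) :
    (Set.Iic I).PairwiseDisjoint (birthPairs xb I) := by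
  intro a ha b hb hab
  have hcells : Disjoint (Set.Ico (xb (a - 1)) (xb a)) (Set.Ico (xb (b - 1)) (xb b)) :=
    pairwiseDisjoint_Ico_pred_of_monotoneOn (isLowerSet_Iic I) hxb ha hb hab
  exact Finset.disjoint_left.2 fun _ hqa hqb =>
    Set.disjoint_left.1 hcells (Finset.mem_filter.1 hqa).2.2 (Finset.mem_filter.1 hqb).2.2

theorem birthPairs_subset_lowerTriangle (i : ℕ) :
    birthPairs xb I i ⊆ {q ∈ Finset.Icc 1 I ×ˢ Finset.Icc 1 I | q.2 ≤ q.1} :=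
  Finset.monotone_filter_right _ fun _ _ hq => hq.1

theorem Bhat_eq_sum_collisionRate
    (hβsym : ∀ j ∈ Finset.Icc 1 I, ∀ k ∈ Finset.Icc 1 I,
      β (pivot xb j) (pivot xb k) = β (pivot xb k) (pivot xb j)) (i : ℕ) :
    Bhat xb β I N i = ∑ q ∈ birthPairs xb I i,
      (if q.1 = q.2 then 1 / 2 else 1) * collisionRate xb β N q.1 q.2 := by
  refine Finset.sum_congr rfl fun q hq => ?_
  obtain ⟨hj, hk⟩ := Finset.mem_product.1 (Finset.mem_filter.1 hq).1
  rw [collisionRate, hβsym q.1 hj q.2 hk]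
  ring

theorem sum_Bhat_le_half_sum_collisionRate (hxb : MonotoneOn xb (Set.Iic I))
    (hβsym : ∀ j ∈ Finset.Icc 1 I, ∀ k ∈ Finset.Icc 1 I,
      β (pivot xb j) (pivot xb k) = β (pivot xb k) (pivot xb j))
    (hrate : ∀ j ∈ Finset.Icc 1 I, ∀ k ∈ Finset.Icc 1 I, 0 ≤ collisionRate xb β N j k) :
    ∑ i ∈ Finset.Icc 1 I, Bhat xb β I N i ≤
      1 / 2 * ∑ j ∈ Finset.Icc 1 I, ∑ k ∈ Finset.Icc 1 I, collisionRate xb β N j k := by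
  have hdisj : (Finset.Icc 1 I : Set ℕ).PairwiseDisjoint (birthPairs xb I) :=
    (pairwiseDisjoint_birthPairs hxb).subset fun _ hi => (Finset.mem_Icc.1 hi).2
  simp only [Bhat_eq_sum_collisionRate hβsym]
  rw [← sum_lowerTriangle_eq_half_sum_of_symm fun j hj k hk =>
    collisionRate_comm (hβsym j hj k hk)]
  refine sum_sum_le_sum_of_pairwiseDisjoint hdisj
    (fun i _ => birthPairs_subset_lowerTriangle i) fun q hq => ?_
  obtain ⟨hj, hk⟩ := Finset.mem_product.1 (Finset.mem_filter.1 hq).1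
  exact mul_nonneg (by positivity) (hrate q.1 hj q.2 hk)

theorem Dhat_eq_sum_collisionRate (i : ℕ) :
    Dhat xb β I N i = ∑ k ∈ Finset.Icc 1 I, collisionRate xb β N i k := by
  simp only [Dhat, collisionRate, Finset.mul_sum, mul_assoc, mul_left_comm]

theorem half_sum_collisionRate_le_sum_Dhat
    (hrate : ∀ j ∈ Finset.Icc 1 I, ∀ k ∈ Finset.Icc 1 I, 0 ≤ collisionRate xb β N j k) :
    1 / 2 * ∑ j ∈ Finset.Icc 1 I, ∑ k ∈ Finset.Icc 1 I, collisionRate xb β N j k ≤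
      ∑ i ∈ Finset.Icc 1 I, Dhat xb β I N i := by
  simp only [Dhat_eq_sum_collisionRate]
  exact mul_le_of_le_one_left
    (Finset.sum_nonneg fun j hj => Finset.sum_nonneg (hrate j hj)) (by norm_num)

end Rates

theorem stmt8_general {I : ℕ} {xb : ℕ → ℝ} (hxb : MonotoneOn xb (Set.Iic I))
    {β : ℝ → ℝ → ℝ}
    (hβsym : ∀ j ∈ Finset.Icc 1 I, ∀ k ∈ Finset.Icc 1 I,
      β (pivot xb j) (pivot xb k) = β (pivot xb k) (pivot xb j))
    (hβpos : ∀ j ∈ Finset.Icc 1 I, ∀ k ∈ Finset.Icc 1 I, 0 ≤ β (pivot xb j) (pivot xb k))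
    {N : ℕ → ℝ} (hN : ∀ j ∈ Finset.Icc 1 I, 0 ≤ N j) :
    ∑ i ∈ Finset.Icc 1 I, Bhat xb β I N i ≤
      (1/2) * ∑ j ∈ Finset.Icc 1 I, ∑ k ∈ Finset.Icc 1 I,
        β (pivot xb j) (pivot xb k) * N j * N k ∧
    (1/2) * ∑ j ∈ Finset.Icc 1 I, ∑ k ∈ Finset.Icc 1 I,
        β (pivot xb j) (pivot xb k) * N j * N k ≤
      ∑ i ∈ Finset.Icc 1 I, Dhat xb β I N i := by
  have hrate : ∀ j ∈ Finset.Icc 1 I, ∀ k ∈ Finset.Icc 1 I, 0 ≤ collisionRate xb β N j k :=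
    fun j hj k hk => collisionRate_nonneg (hβpos j hj k hk) (hN j hj) (hN k hk)
  exact ⟨sum_Bhat_le_half_sum_collisionRate hxb hβsym hrate,
    half_sum_collisionRate_le_sum_Dhat hrate⟩

/-- The total discrete birth rate is at most `(1/2) ∑_j ∑_k β(x_j,x_k) N_j N_k`, which in
turn is at most the total discrete death rate: the total number of particles is
nonincreasing in the coagulation process. -/
theorem stmt8 (I : ℕ) (hI : 1 ≤ I) (R : ℝ) (hR : 0 < R)
    (xb : ℕ → ℝ) (hxb0 : xb 0 = 0) (hxbI : xb I = R)
    (hmono : ∀ k < I, xb k < xb (k + 1))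
    (β : ℝ → ℝ → ℝ)
    (hβsym : ∀ x y, β x y = β y x)
    (hβpos : ∀ j ∈ Finset.Icc 1 I, ∀ k ∈ Finset.Icc 1 I, 0 ≤ β (pivot xb j) (pivot xb k))
    (N : ℕ → ℝ) (hN : ∀ j ∈ Finset.Icc 1 I, 0 ≤ N j) :
    ∑ i ∈ Finset.Icc 1 I, Bhat xb β I N i ≤
      (1/2) * ∑ j ∈ Finset.Icc 1 I, ∑ k ∈ Finset.Icc 1 I,
        β (pivot xb j) (pivot xb k) * N j * N k ∧
    (1/2) * ∑ j ∈ Finset.Icc 1 I, ∑ k ∈ Finset.Icc 1 I,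
        β (pivot xb j) (pivot xb k) * N j * N k ≤
      ∑ i ∈ Finset.Icc 1 I, Dhat xb β I N i := by
  exact stmt8_general (strictMonoOn_Iic_of_lt_succ hmono).monotoneOn
    (fun _ _ _ _ => hβsym _ _) hβpos hN
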